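/- arXiv:1009.4379 — 2 statements merged into one kernel-verified Lean document; each statement's English description precedes it below -/
import Mathlib

section
/- Let Γ be a countable group with Property (Fab) such that either Γ is torsion-free, or Γ is icc (Γ ≠ {e} and every conjugacy class of Γ other than {e} is infinite). Then for every normalised multiplier ζ ∈ Z²(Γ,T), the group Γ has a ζ-representation which is both irreducible and projectively faithful. -/
/-- A projective unitary representation: a map into the unitary operators sending `1` to `id`
whose composition with the quotient by the circle is a homomorphism. -/
def IsProjUnitaryRep {G : Type*} [Group G] {H : Type*} [NormedAddCommGroup H]
    [InnerProductSpace ℂ H] [CompleteSpace H] (π : G → (H →L[ℂ] H)) : Prop :=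
  (∀ x, π x ∈ unitary (H →L[ℂ] H)) ∧ π 1 = 1 ∧
    ∀ x y, ∃ z : Circle, π x * π y = (z : ℂ) • π (x * y)

/-- The projective kernel of a projective representation. -/
def ProjKer {G : Type*} [Group G] {H : Type*} [NormedAddCommGroup H]
    [InnerProductSpace ℂ H] [CompleteSpace H] (π : G → (H →L[ℂ] H)) : Set G :=
  {x | ∃ z : Circle, π x = (z : ℂ) • (1 : H →L[ℂ] H)}

/-- Projective faithfulness. -/
def PFaithful {G : Type*} [Group G] {H : Type*} [NormedAddCommGroup H]
    [InnerProductSpace ℂ H] [CompleteSpace H] (π : G → (H →L[ℂ] H)) : Prop :=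
  ∀ x, x ∈ ProjKer π → x = 1

/-- Irreducibility: the only closed invariant subspaces are `⊥` and `⊤`. -/
def IsIrreducibleRep {G : Type*} {H : Type*} [NormedAddCommGroup H]
    [InnerProductSpace ℂ H] [CompleteSpace H] (π : G → (H →L[ℂ] H)) : Prop :=
  ∀ K : Submodule ℂ H, IsClosed (K : Set H) → (∀ x, ∀ v ∈ K, π x v ∈ K) → K = ⊥ ∨ K = ⊤

/-- An (ordinary) unitary representation. -/
def IsUnitaryRep {G : Type*} [Group G] {H : Type*} [NormedAddCommGroup H]
    [InnerProductSpace ℂ H] [CompleteSpace H] (π : G → (H →L[ℂ] H)) : Prop :=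
  (∀ x, π x ∈ unitary (H →L[ℂ] H)) ∧ π 1 = 1 ∧ ∀ x y, π (x * y) = π x * π y

/-- A multiplier (2-cocycle) with values in the circle group. -/
def IsMultiplier {G : Type*} [Group G] (ζ : G → G → Circle) : Prop :=
  (∀ x, ζ 1 x = 1) ∧ (∀ x, ζ x 1 = 1) ∧
    ∀ x y z, ζ x y * ζ (x * y) z = ζ x (y * z) * ζ y z

/-- A normalised multiplier. -/
def IsNormalised {G : Type*} [Group G] (ζ : G → G → Circle) : Prop :=
  ∀ x : G, ζ x x⁻¹ = 1

/-- A ζ-representation of `G`. -/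
def IsZetaRep {G : Type*} [Group G] {H : Type*} [NormedAddCommGroup H]
    [InnerProductSpace ℂ H] [CompleteSpace H] (ζ : G → G → Circle)
    (π : G → (H →L[ℂ] H)) : Prop :=
  (∀ x, π x ∈ unitary (H →L[ℂ] H)) ∧ π 1 = 1 ∧
    ∀ x y, π x * π y = ((ζ x y : ℂ)) • π (x * y)

/-- A ζ-representation of a subgroup `N` of `G` (with respect to the restriction of ζ). -/
def IsZetaRepOn {G : Type*} [Group G] {H : Type*} [NormedAddCommGroup H]
    [InnerProductSpace ℂ H] [CompleteSpace H] (ζ : G → G → Circle) (N : Subgroup G)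
    (σ : N → (H →L[ℂ] H)) : Prop :=
  (∀ x, σ x ∈ unitary (H →L[ℂ] H)) ∧ σ 1 = 1 ∧
    ∀ x y : N, σ x * σ y = ((ζ (x : G) (y : G) : ℂ)) • σ (x * y)

open scoped Classical in
/-- The conjugate `σ^γ` of a projective representation `σ` of a (normal) subgroup `N`:
`σ^γ(x) = ζ(γ,x)·ζ(γx,γ⁻¹)·σ(γxγ⁻¹)`. -/
noncomputable def conjRep {G : Type*} [Group G] {H : Type*} [NormedAddCommGroup H]
    [InnerProductSpace ℂ H] [CompleteSpace H] (ζ : G → G → Circle) (N : Subgroup G)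
    (σ : N → (H →L[ℂ] H)) (γ : G) (x : N) : H →L[ℂ] H :=
  if h : γ * (x : G) * γ⁻¹ ∈ N then
    ((ζ γ (x : G) : ℂ) * (ζ (γ * (x : G)) γ⁻¹ : ℂ)) • σ ⟨γ * (x : G) * γ⁻¹, h⟩
  else 1

/-- `σ` is Γ-P-faithful: the projective Γ-kernel
`{x ∈ N : ∃ z ∈ T, σ^γ(x) = z·id for all γ}` is trivial. -/
def GammaPFaithful {G : Type*} [Group G] {H : Type*} [NormedAddCommGroup H]
    [InnerProductSpace ℂ H] [CompleteSpace H] (ζ : G → G → Circle) (N : Subgroup G)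
    (σ : N → (H →L[ℂ] H)) : Prop :=
  ∀ x : N, (∃ z : Circle, ∀ γ : G, conjRep ζ N σ γ x = (z : ℂ) • (1 : H →L[ℂ] H)) → x = 1

/-- A finite foot of `G`: a finite minimal (nontrivial) normal subgroup. -/
def IsFiniteFoot {G : Type*} [Group G] (N : Subgroup G) : Prop :=
  N.Normal ∧ N ≠ ⊥ ∧ (∀ M : Subgroup G, M.Normal → M ≠ ⊥ → M ≤ N → M = N) ∧ Finite N

/-- The minisocle: the subgroup generated by all finite feet. -/
def minisocle (G : Type*) [Group G] : Subgroup G :=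
  ⨆ (N : Subgroup G) (_ : IsFiniteFoot N), N

/-- Property (Fab): the normal subgroup generated by any single conjugacy class has finite
abelianisation. -/
def PropertyFab (G : Type*) [Group G] : Prop :=
  ∀ g : G, Finite (Abelianization (Subgroup.normalClosure ({g} : Set G)))

open scoped ComplexOrder InnerProductSpace

section States

/-- The state space of a C⋆-algebra, as a set of functions. -/
def stateSet (A : Type*) [CStarAlgebra A] [PartialOrder A] : Set (A → ℂ) :=
  {φ | IsLinearMap ℂ φ ∧ (∀ a, 0 ≤ a → 0 ≤ φ a) ∧ φ 1 = 1 ∧ ∀ a, ‖φ a‖ ≤ ‖a‖}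

lemma isCompact_stateSet (A : Type*) [CStarAlgebra A] [PartialOrder A] :
    IsCompact (stateSet A) := by
  refine (isCompact_univ_pi fun a : A ↦ isCompact_closedBall (0 : ℂ) ‖a‖).of_isClosed_subset ?_ ?_
  · have : stateSet A = (⋂ (a : A) (b : A), {φ : A → ℂ | φ (a + b) = φ a + φ b}) ∩
        (⋂ (c : ℂ) (a : A), {φ : A → ℂ | φ (c • a) = c • φ a}) ∩
        (⋂ (a : A) (_ : 0 ≤ a), {φ : A → ℂ | 0 ≤ φ a}) ∩ {φ | φ 1 = 1} ∩
        ⋂ a : A, {φ : A → ℂ | ‖φ a‖ ≤ ‖a‖} := by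
      ext φ
      simp only [stateSet, Set.mem_inter_iff, Set.mem_iInter, Set.mem_ofPred_eq]
      exact ⟨fun ⟨⟨h1, h2⟩, h3, h4, h5⟩ ↦ ⟨⟨⟨⟨h1, h2⟩, h3⟩, h4⟩, h5⟩,
        fun ⟨⟨⟨⟨h1, h2⟩, h3⟩, h4⟩, h5⟩ ↦ ⟨⟨h1, h2⟩, h3, h4, h5⟩⟩
    rw [this]
    refine ((((isClosed_iInter fun a ↦ isClosed_iInter fun b ↦ ?_).inter
      (isClosed_iInter fun c ↦ isClosed_iInter fun a ↦ ?_)).inter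
      (isClosed_iInter fun a ↦ isClosed_iInter fun _ ↦ ?_)).inter ?_).inter
      (isClosed_iInter fun a ↦ ?_)
    · exact isClosed_eq (by fun_prop) (by fun_prop)
    · exact isClosed_eq (by fun_prop) (by fun_prop)
    · exact isClosed_le (by fun_prop) (by fun_prop)
    · exact isClosed_eq (by fun_prop) (by fun_prop)
    · exact isClosed_le (by fun_prop) (by fun_prop)
  · intro φ hφ a _
    simpa using hφ.2.2.2 a

variable {A : Type*} [CStarAlgebra A] [PartialOrder A] [StarOrderedRing A]

/-- From `e * d ≠ 0` one produces a nonzero right multiple `e * y` of `e` on which some `h ≤ 1`,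
dominated by an element of the two-sided ideal generated by `d`, acts as a unit. -/
lemma exists_local_unit (e d : A) (hed : e * d ≠ 0) :
    ∃ h y : A, e * y ≠ 0 ∧ h * (e * y) = e * y ∧ h ≤ 1 ∧ ∃ b, h ≤ e * d * b := by
  have : Nontrivial A := ⟨⟨_, _, hed⟩⟩
  set r : ℝ := ‖e * d * star (e * d)‖ with hr
  have hr0 : 0 < r := by
    rw [hr, CStarRing.norm_self_mul_star]
    have := norm_pos_iff.mpr hed
    positivity
  set b : A := e * d * (r⁻¹ • star (e * d)) with hb
  have hb' : b = r⁻¹ • (e * d * star (e * d)) := by rw [hb, mul_smul_comm]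
  have hb0 : 0 ≤ b := by
    rw [hb']
    exact smul_nonneg (by positivity) (mul_star_self_nonneg _)
  have hbn : ‖b‖ = 1 := by
    rw [hb', norm_smul, ← hr, Real.norm_of_nonneg (by positivity), inv_mul_cancel₀ hr0.ne']
  have hsa : IsSelfAdjoint b := hb0.isSelfAdjoint
  let g : ℝ → ℝ := fun t ↦ max 0 (t - 1 / 2)
  let k : ℝ → ℝ := fun t ↦ min 1 (2 * t)
  have hg : Continuous g := by fun_prop
  have hk : Continuous k := by fun_prop
  have hprod : cfc (fun t : ℝ ↦ t * g t) b = b * cfc g b := by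
    rw [cfc_mul (fun t : ℝ ↦ t) g b, cfc_id' ℝ b]
  have hne : b * cfc g b ≠ 0 := by
    intro h0
    rw [← hprod] at h0
    have h1 : (1 : ℝ) ∈ spectrum ℝ b := hbn ▸ CStarAlgebra.norm_mem_spectrum_of_nonneg hb0
    have h2 : (fun t : ℝ ↦ t * g t) 1 ∈ spectrum ℝ (cfc (fun t : ℝ ↦ t * g t) b) := by
      rw [cfc_map_spectrum (fun t : ℝ ↦ t * g t) b]
      exact ⟨1, h1, rfl⟩
    rw [h0, spectrum.zero_eq] at h2
    norm_num [g] at h2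
  have hunit : cfc k b * (b * cfc g b) = b * cfc g b := by
    rw [← hprod, ← cfc_mul k (fun t : ℝ ↦ t * g t) b]
    congr 1
    funext t
    simp only [g, k]
    rcases le_total t (1 / 2) with ht | ht
    · rw [max_eq_left (by linarith)]; simp
    · rw [min_eq_left (by linarith)]; simp
  refine ⟨cfc k b, d * (r⁻¹ • star (e * d)) * cfc g b, ?_, ?_, ?_, 2 • (r⁻¹ • star (e * d)), ?_⟩
  · simpa [hb, mul_assoc] using hne
  · simpa [hb, mul_assoc] using hunit
  · exact cfc_le_one k b fun t _ ↦ min_le_left _ _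
  · have h2 : cfc (fun t : ℝ ↦ 2 * t) b = e * d * (2 • (r⁻¹ • star (e * d))) := by
      rw [cfc_const_mul (2 : ℝ) (fun t : ℝ ↦ t) b, cfc_id' ℝ b, hb, mul_smul_comm 2, two_smul,
        two_nsmul]
    rw [← h2]
    exact cfc_mono fun t _ ↦ min_le_right _ _

lemma exists_seq_local_unit [Nontrivial A] (D : ℕ → Set A)
    (hD : ∀ n, ∀ e : A, e ≠ 0 → ∃ d ∈ D n, e * d ≠ 0) :
    ∃ h : ℕ → A, (∀ n, h n ≤ 1) ∧ (∀ n, ∃ d ∈ D n, ∃ a b, h n ≤ a * d * b) ∧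
      ∀ n, ∃ e : A, e ≠ 0 ∧ ∀ i < n, h i * e = e := by
  have step (n : ℕ) (e : {e : A // e ≠ 0}) : ∃ (h : A) (e' : {e : A // e ≠ 0}),
      h ≤ 1 ∧ (∃ d ∈ D n, ∃ a b, h ≤ a * d * b) ∧ h * e' = e' ∧ ∃ y, (e' : A) = e * y := by
    obtain ⟨d, hd, hed⟩ := hD n e e.2
    obtain ⟨h, y, hy, hhy, h1, b, hb⟩ := exists_local_unit e.1 d hed
    exact ⟨h, ⟨_, hy⟩, h1, ⟨d, hd, e, b, hb⟩, hhy, y, rfl⟩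
  choose h e' h1 hd hu hy using step
  let s : ℕ → {e : A // e ≠ 0} := fun n ↦ Nat.rec ⟨1, one_ne_zero⟩ (fun n e ↦ e' n e) n
  have hs (n : ℕ) : ∀ i < n, h i (s i) * (s n).1 = (s n).1 := by
    induction n with
    | zero => simp
    | succ n ih =>
      intro i hi
      rcases Nat.lt_succ_iff_lt_or_eq.mp hi with hi | rfl
      · obtain ⟨y, hy⟩ := hy n (s n)
        change _ * (e' n (s n) : A) = e' n (s n)
        rw [hy, ← mul_assoc, ih i hi]
      · exact hu i (s i)
  exact ⟨fun n ↦ h n (s n), fun n ↦ h1 n _, fun n ↦ hd n _, fun n ↦ ⟨_, (s n).2, hs n⟩⟩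

variable {H : Type*} [NormedAddCommGroup H] [InnerProductSpace ℂ H] [CompleteSpace H]

lemma vectorState_mem_stateSet (ρ : A →⋆ₐ[ℂ] (H →L[ℂ] H)) (v : H) (hv : ‖v‖ = 1) :
    (fun a ↦ ⟪v, ρ a v⟫_ℂ) ∈ stateSet A := by
  refine ⟨⟨fun a b ↦ ?_, fun c a ↦ ?_⟩, fun a ha ↦ ?_, ?_, fun a ↦ ?_⟩
  · simp
  · simp
  · obtain ⟨b, rfl⟩ := CStarAlgebra.nonneg_iff_eq_star_mul_self.mp ha
    simp only [map_mul, map_star, ContinuousLinearMap.star_eq_adjoint]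
    rw [mul_apply_eq_comp, ContinuousLinearMap.adjoint_inner_right,
      inner_self_eq_norm_sq_to_K]
    simp only [Complex.coe_algebraMap]
    exact_mod_cast sq_nonneg ‖ρ b v‖
  · simp [inner_self_eq_norm_sq_to_K, hv]
  · calc ‖⟪v, ρ a v⟫_ℂ‖ ≤ ‖v‖ * ‖ρ a v‖ := norm_inner_le_norm _ _
      _ ≤ ‖v‖ * (‖ρ a‖ * ‖v‖) := by gcongr; exact (ρ a).le_opNorm v
      _ ≤ ‖a‖ := by simpa [hv] using NonUnitalStarAlgHom.norm_apply_le ρ a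

lemma exists_extreme_state [Nontrivial A] (ρ : A →⋆ₐ[ℂ] (H →L[ℂ] H))
    (hρ : Function.Injective ρ) (D : ℕ → Set A)
    (hD : ∀ n, ∀ e : A, e ≠ 0 → ∃ d ∈ D n, e * d ≠ 0) :
    ∃ φ ∈ (stateSet A).extremePoints ℝ, ∀ n, ∃ d ∈ D n, ∃ a b, φ (a * d * b) ≠ 0 := by
  obtain ⟨h, h1, hd, he⟩ := exists_seq_local_unit D hD
  have hle (φ) (hφ : φ ∈ stateSet A) (a b : A) (hab : a ≤ b) : φ a ≤ φ b := by
    have := hφ.2.1 _ (sub_nonneg.mpr hab)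
    rwa [hφ.1.map_sub, sub_nonneg] at this
  let F (n : ℕ) : Set (A → ℂ) := stateSet A ∩ {φ | ∀ i < n, φ (h i) = 1}
  have hFclosed (n) : IsClosed (F n) := by
    refine (isCompact_stateSet A).isClosed.inter ?_
    simp only [Set.ofPred_forall]
    exact isClosed_iInter fun i ↦ isClosed_iInter fun _ ↦ isClosed_eq (by fun_prop) (by fun_prop)
  have hFne (n) : (F n).Nonempty := by
    obtain ⟨e, he0, hei⟩ := he n
    have : ρ e ≠ 0 := fun h0 ↦ he0 (hρ (by rw [h0, map_zero]))
    obtain ⟨w, hw⟩ : ∃ w, ρ e w ≠ 0 := by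
      by_contra! hcon
      exact this (ContinuousLinearMap.ext hcon)
    set v : H := (‖ρ e w‖⁻¹ : ℂ) • ρ e w with hv
    have hvn : ‖v‖ = 1 := by
      rw [hv, norm_smul, norm_inv, Complex.norm_real, norm_norm,
        inv_mul_cancel₀ (norm_ne_zero_iff.mpr hw)]
    refine ⟨_, vectorState_mem_stateSet ρ v hvn, fun i hi ↦ ?_⟩
    have hfix : ρ (h i) v = v := by
      rw [hv, map_smul, ← mul_apply_eq_comp, ← map_mul, hei i hi]
    simp [hfix, inner_self_eq_norm_sq_to_K, hvn]
  have hne : (⋂ n, F n).Nonempty := by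
    refine IsCompact.nonempty_iInter_of_sequence_nonempty_isCompact_isClosed F
      (fun n φ hφ ↦ ⟨hφ.1, fun i hi ↦ hφ.2 i (hi.trans n.lt_succ_self)⟩) hFne ?_ hFclosed
    exact (isCompact_stateSet A).of_isClosed_subset (hFclosed 0) Set.inter_subset_left
  have hcpt : IsCompact (⋂ n, F n) :=
    (isCompact_stateSet A).of_isClosed_subset (isClosed_iInter hFclosed)
      ((Set.iInter_subset F 0).trans Set.inter_subset_left)
  have hmem (φ) : φ ∈ (⋂ n, F n) ↔ φ ∈ stateSet A ∧ ∀ i, φ (h i) = 1 := by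
    simp only [F, Set.mem_iInter]
    exact ⟨fun hφ ↦ ⟨(hφ 0).1, fun i ↦ (hφ (i + 1)).2 i i.lt_succ_self⟩,
      fun hφ n ↦ ⟨hφ.1, fun i _ ↦ hφ.2 i⟩⟩
  obtain ⟨φ, hφ⟩ := hcpt.extremePoints_nonempty hne
  have hφS := (hmem φ).mp hφ.1
  have hface : IsExtreme ℝ (stateSet A) (⋂ n, F n) := by
    refine ⟨fun ψ hψ ↦ ((hmem ψ).mp hψ).1, ?_⟩
    rintro ψ₁ hψ₁ ψ₂ hψ₂ ψ hψ ⟨s, t, hs, ht, hst, rfl⟩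
    refine (hmem _).mpr ⟨hψ₁, fun i ↦ ?_⟩
    have e := ((hmem _).mp hψ).2 i
    have l₁ := hle ψ₁ hψ₁ _ _ (h1 i)
    have l₂ := hle ψ₂ hψ₂ _ _ (h1 i)
    rw [hψ₁.2.2.1, Complex.le_def] at l₁
    rw [hψ₂.2.2.1, Complex.le_def] at l₂
    simp only [Complex.one_re, Complex.one_im] at l₁ l₂
    refine Complex.ext ?_ (by simpa using l₁.2)
    have e' := congrArg Complex.re e
    simp at e'
    have : s * (1 - (ψ₁ (h i)).re) + t * (1 - (ψ₂ (h i)).re) = 0 := by linarith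
    have p₂ : 0 ≤ t * (1 - (ψ₂ (h i)).re) := mul_nonneg ht.le (by linarith)
    have : s * (1 - (ψ₁ (h i)).re) ≤ 0 := by linarith
    have := nonpos_of_mul_nonpos_right this hs
    simp only [Complex.one_re]
    linarith
  refine ⟨φ, hface.extremePoints_subset_extremePoints hφ, fun n ↦ ?_⟩
  obtain ⟨d, hdD, a, b, hab⟩ := hd n
  refine ⟨d, hdD, a, b, fun h0 ↦ ?_⟩
  have := hle φ hφS.1 _ _ hab
  rw [hφS.2 n, h0] at this
  norm_num [Complex.le_def] at this

/-- The canonical cyclic vector of the GNS representation. -/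
noncomputable def gnsCyclicVector (f : A →ₚ[ℂ] ℂ) : f.GNS := (f.toPreGNS 1 : f.PreGNS)

lemma gnsStarAlgHom_cyclicVector (f : A →ₚ[ℂ] ℂ) (a : A) :
    f.gnsStarAlgHom a (gnsCyclicVector f) = (f.toPreGNS a : f.PreGNS) := by
  simp [gnsCyclicVector]

lemma inner_gnsCyclicVector (f : A →ₚ[ℂ] ℂ) (a : A) :
    ⟪gnsCyclicVector f, f.gnsStarAlgHom a (gnsCyclicVector f)⟫_ℂ = f a := by
  rw [gnsStarAlgHom_cyclicVector, gnsCyclicVector, UniformSpace.Completion.inner_coe,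
    PositiveLinearMap.preGNS_inner_def]
  simp

lemma eq_top_of_gnsCyclicVector_mem (f : A →ₚ[ℂ] ℂ) (K : Submodule ℂ f.GNS)
    (hK : IsClosed (K : Set f.GNS)) (hinv : ∀ a, ∀ v ∈ K, f.gnsStarAlgHom a v ∈ K)
    (hξ : gnsCyclicVector f ∈ K) : K = ⊤ := by
  rw [eq_top_iff]
  rintro v -
  induction v using UniformSpace.Completion.induction_on with
  | hp => exact hK
  | ih a => simpa only [gnsStarAlgHom_cyclicVector, PositiveLinearMap.toPreGNS_ofPreGNS]
      using hinv (f.ofPreGNS a) _ hξ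

/-- The GNS representation of an extreme state is irreducible. -/
lemma gns_irreducible_of_extreme (f : A →ₚ[ℂ] ℂ) (hf : ⇑f ∈ (stateSet A).extremePoints ℝ)
    (K : Submodule ℂ f.GNS) (hK : IsClosed (K : Set f.GNS))
    (hinv : ∀ a, ∀ v ∈ K, f.gnsStarAlgHom a v ∈ K) : K = ⊥ ∨ K = ⊤ := by
  have : CompleteSpace K := hK.completeSpace_coe
  set ξ := gnsCyclicVector f with hξ
  set π := f.gnsStarAlgHom
  have hinv' (a) : ∀ v ∈ Kᗮ, π a v ∈ Kᗮ := by
    intro v hv u hu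
    rw [← ContinuousLinearMap.adjoint_inner_left, ← ContinuousLinearMap.star_eq_adjoint,
      ← map_star]
    exact hv _ (hinv _ _ hu)
  obtain ⟨p, hp, q, hq, hpq⟩ : ∃ p ∈ K, ∃ q ∈ Kᗮ, ξ = p + q :=
    K.exists_add_mem_mem_orthogonal ξ
  by_cases hp0 : p = 0
  · left
    have : Kᗮ = ⊤ := eq_top_of_gnsCyclicVector_mem f Kᗮ K.isClosed_orthogonal hinv'
      (by rw [← hξ, hpq, hp0, zero_add]; exact hq)
    exact (Submodule.orthogonal_eq_top_iff (K := K)).mp this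
  right
  refine eq_top_of_gnsCyclicVector_mem f K hK hinv ?_
  rw [← hξ]
  by_cases hq0 : q = 0
  · rw [hpq, hq0, add_zero]; exact hp
  have hvec (u : f.GNS) (hu : u ≠ 0) :
      (fun a ↦ ((‖u‖ ^ 2 : ℝ) : ℂ)⁻¹ * ⟪u, π a u⟫_ℂ) ∈ stateSet A := by
    have hn : ‖((‖u‖ : ℂ)⁻¹) • u‖ = 1 := by
      rw [norm_smul, norm_inv, Complex.norm_real, norm_norm,
        inv_mul_cancel₀ (norm_ne_zero_iff.mpr hu)]
    convert vectorState_mem_stateSet π _ hn using 2 with a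
    simp only [map_smul, inner_smul_left, inner_smul_right, map_inv₀, Complex.conj_ofReal]
    push_cast
    ring
  have hcross (a : A) : ⟪p, π a q⟫_ℂ = 0 := hinv' a q hq p hp
  have hcross' (a : A) : ⟪q, π a p⟫_ℂ = 0 := by
    rw [← inner_conj_symm, hq _ (hinv a p hp), map_zero]
  have hsplit (a : A) : f a = ⟪p, π a p⟫_ℂ + ⟪q, π a q⟫_ℂ := by
    rw [← inner_gnsCyclicVector f a, ← hξ, hpq, map_add, inner_add_left, inner_add_right,
      inner_add_right, hcross, hcross']
    ring
  have hp2 : (0 : ℝ) < ‖p‖ ^ 2 := by have := norm_pos_iff.mpr hp0; positivity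
  have hq2 : (0 : ℝ) < ‖q‖ ^ 2 := by have := norm_pos_iff.mpr hq0; positivity
  have hsum : ‖p‖ ^ 2 + ‖q‖ ^ 2 = 1 := by
    have h1 := hsplit 1
    rw [hf.1.2.2.1, map_one, one_apply_eq_self, one_apply_eq_self,
      inner_self_eq_norm_sq_to_K, inner_self_eq_norm_sq_to_K] at h1
    refine Complex.ofReal_injective ?_
    simpa using h1.symm
  have hseg : ⇑f ∈ openSegment ℝ (fun a ↦ ((‖p‖ ^ 2 : ℝ) : ℂ)⁻¹ * ⟪p, π a p⟫_ℂ)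
      (fun a ↦ ((‖q‖ ^ 2 : ℝ) : ℂ)⁻¹ * ⟪q, π a q⟫_ℂ) := by
    refine ⟨‖p‖ ^ 2, ‖q‖ ^ 2, hp2, hq2, hsum, funext fun a ↦ ?_⟩
    have hp2' : ((‖p‖ ^ 2 : ℝ) : ℂ) ≠ 0 := by exact_mod_cast hp2.ne'
    have hq2' : ((‖q‖ ^ 2 : ℝ) : ℂ) ≠ 0 := by exact_mod_cast hq2.ne'
    simp only [Pi.add_apply, Pi.smul_apply, Complex.real_smul]
    rw [mul_inv_cancel_left₀ hp2', mul_inv_cancel_left₀ hq2', hsplit]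
  have heq := hf.2 (hvec p hp0) (hvec q hq0) hseg
  have horth (a : A) : ⟪p - ((‖p‖ ^ 2 : ℝ) : ℂ) • ξ, π a ξ⟫_ℂ = 0 := by
    have h1 := congrFun heq a
    have hp2' : ((‖p‖ ^ 2 : ℝ) : ℂ) ≠ 0 := by exact_mod_cast hp2.ne'
    rw [inner_sub_left, inner_smul_left, inner_gnsCyclicVector, ← h1, Complex.conj_ofReal,
      mul_inv_cancel_left₀ hp2', hpq, map_add, inner_add_right, hcross]
    ring
  have hzero : p - ((‖p‖ ^ 2 : ℝ) : ℂ) • ξ = 0 := by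
    have hall (v : f.GNS) : ⟪p - ((‖p‖ ^ 2 : ℝ) : ℂ) • ξ, v⟫_ℂ = 0 := by
      induction v using UniformSpace.Completion.induction_on with
      | hp => exact isClosed_eq (by fun_prop) (by fun_prop)
      | ih a =>
        have := horth (f.ofPreGNS a)
        rwa [hξ, gnsStarAlgHom_cyclicVector] at this
    exact inner_self_eq_zero.mp (hall _)
  rw [sub_eq_zero] at hzero
  have : ξ = ((‖p‖ ^ 2 : ℝ) : ℂ)⁻¹ • p := by
    rw [hzero, smul_smul, ← hzero, inv_mul_cancel₀ (by exact_mod_cast hp2.ne'), one_smul]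
  rw [this]
  exact K.smul_mem _ hp

/-- A C⋆-algebra represented faithfully on a Hilbert space has an irreducible representation
annihilating none of countably many sets, each with trivial left annihilator. -/
theorem exists_irreducible_gns [Nontrivial A] (ρ : A →⋆ₐ[ℂ] (H →L[ℂ] H))
    (hρ : Function.Injective ρ) {ι : Type*} [Countable ι] (D : ι → Set A)
    (hD : ∀ i, ∀ e : A, e ≠ 0 → ∃ d ∈ D i, e * d ≠ 0) :
    ∃ f : A →ₚ[ℂ] ℂ, Nontrivial f.GNS ∧
      (∀ K : Submodule ℂ f.GNS, IsClosed (K : Set f.GNS) →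
        (∀ a, ∀ v ∈ K, f.gnsStarAlgHom a v ∈ K) → K = ⊥ ∨ K = ⊤) ∧
      ∀ i, ∃ d ∈ D i, f.gnsStarAlgHom d ≠ 0 := by
  obtain ⟨s, hs⟩ := exists_surjective_nat (Option ι)
  let D' : Option ι → Set A := fun o ↦ o.elim {1} D
  obtain ⟨φ, hφ, hφD⟩ := exists_extreme_state ρ hρ (fun n ↦ D' (s n)) (by
    intro n e he
    cases hn : s n with
    | none => exact ⟨1, by simp [D'], by simpa using he⟩
    | some i => exact hD i e he)
  let f : A →ₚ[ℂ] ℂ := PositiveLinearMap.mk₀ hφ.1.1.mk' hφ.1.2.1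
  have hf : Nontrivial f.GNS := by
    refine ⟨gnsCyclicVector f, 0, fun h0 ↦ ?_⟩
    have h1 := inner_gnsCyclicVector f 1
    rw [h0, inner_zero_left] at h1
    exact zero_ne_one (h1.trans hφ.1.2.2.1)
  refine ⟨f, hf, fun K hK hinv ↦ gns_irreducible_of_extreme f hφ K hK hinv, fun i ↦ ?_⟩
  obtain ⟨n, hn⟩ := hs (some i)
  obtain ⟨d, hd, a, b, hab⟩ := hφD n
  rw [hn] at hd
  refine ⟨d, hd, fun h0 ↦ hab ?_⟩
  have := inner_gnsCyclicVector f (a * d * b)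
  rw [map_mul, map_mul, h0, mul_zero, zero_mul, zero_apply, inner_zero_right] at this
  exact this.symm

end States

section TwistedCharacters

/-- A group with finite abelianisation has finitely many twisted characters for a given twist. -/
lemma finite_twistedCharacters {N : Type*} [Group N] [Finite (Abelianization N)]
    (ω : N → N → Circle) :
    Finite {χ : N → Circle // ∀ m n, χ m * χ n = ω m n * χ (m * n)} := by
  have hhom : Finite (N →* Circle) := by
    have : Finite (Abelianization N →* Circle) := by
      refine Finite.of_injective (fun φ : Abelianization N →* Circle ↦ Circle.toUnits.comp φ) ?_
      intro φ ψ h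
      refine MonoidHom.ext fun a ↦ Circle.ext ?_
      exact congrArg Units.val (DFunLike.congr_fun h a)
    exact Finite.of_equiv _ Abelianization.lift.symm
  rcases isEmpty_or_nonempty {χ : N → Circle // ∀ m n, χ m * χ n = ω m n * χ (m * n)}
    with h | ⟨⟨χ₀⟩⟩
  · infer_instance
  refine Finite.of_injective (fun χ ↦ MonoidHom.mk' (fun n ↦ χ.1 n / χ₀.1 n) fun m n ↦ ?_) ?_
  · rw [div_mul_div_comm, χ.2, χ₀.2, mul_div_mul_left_eq_div]
  · intro χ ψ h
    ext n : 2
    exact div_left_injective (DFunLike.congr_fun h n)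

end TwistedCharacters

section TwistedRegular

variable {G : Type*} [Group G]

/-- The left regular representation twisted by `ζ`, as linear isometries of `ℓ²(G)`. -/
noncomputable def twistedRegularIsometry (ζ : G → G → Circle) (x : G) :
    lp (fun _ : G ↦ ℂ) 2 →ₗᵢ[ℂ] lp (fun _ : G ↦ ℂ) 2 where
  toFun f := ⟨fun g ↦ (ζ x (x⁻¹ * g) : ℂ) * f (x⁻¹ * g), by
    refine memℓp_gen ?_
    simp only [norm_mul, Circle.norm_coe, one_mul]
    exact (Equiv.mulLeft x⁻¹).summable_iff.mpr ((lp.memℓp f).summable (by simp))⟩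
  map_add' f g := by
    ext y
    exact mul_add _ _ _
  map_smul' c f := by
    ext y
    exact mul_left_comm _ _ _
  norm_map' f := by
    rw [lp.norm_eq_tsum_rpow (by simp), lp.norm_eq_tsum_rpow (by simp)]
    congr 1
    rw [← (Equiv.mulLeft x⁻¹).tsum_eq (fun g ↦ ‖f g‖ ^ _)]
    simp [Circle.norm_coe]

/-- The left regular representation twisted by `ζ`. -/
noncomputable def twistedRegular (ζ : G → G → Circle) (x : G) :
    lp (fun _ : G ↦ ℂ) 2 →L[ℂ] lp (fun _ : G ↦ ℂ) 2 :=
  (twistedRegularIsometry ζ x).toContinuousLinearMap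

lemma twistedRegular_apply (ζ : G → G → Circle) (x : G) (f : lp (fun _ : G ↦ ℂ) 2) (g : G) :
    twistedRegular ζ x f g = ζ x (x⁻¹ * g) * f (x⁻¹ * g) := rfl

variable {ζ : G → G → Circle}

lemma twistedRegular_one (hζ : IsMultiplier ζ) : twistedRegular ζ 1 = 1 := by
  ext f g
  simp [twistedRegular_apply, hζ.1]

lemma twistedRegular_mul (hζ : IsMultiplier ζ) (x y : G) :
    twistedRegular ζ x * twistedRegular ζ y = (ζ x y : ℂ) • twistedRegular ζ (x * y) := by
  ext f g
  have h := hζ.2.2 x y ((x * y)⁻¹ * g)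
  have hy : y * ((x * y)⁻¹ * g) = x⁻¹ * g := by group
  rw [hy] at h
  have h' : (ζ x y : ℂ) * ζ (x * y) ((x * y)⁻¹ * g) =
    ζ x (x⁻¹ * g) * ζ y ((x * y)⁻¹ * g) := by exact_mod_cast congrArg Circle.coeHom h
  have hxy : y⁻¹ * (x⁻¹ * g) = (x * y)⁻¹ * g := by group
  simp only [mul_apply_eq_comp, twistedRegular_apply, smul_apply, lp.coeFn_smul, Pi.smul_apply,
    smul_eq_mul, hxy]
  rw [← mul_assoc, ← mul_assoc, h']

lemma star_twistedRegular (hζ : IsMultiplier ζ) (hnorm : IsNormalised ζ) (x : G) :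
    star (twistedRegular ζ x) = twistedRegular ζ x⁻¹ := by
  have h1 : star (twistedRegular ζ x) * twistedRegular ζ x = 1 :=
    (ContinuousLinearMap.norm_map_iff_adjoint_comp_self _).mp (twistedRegularIsometry ζ x).norm_map
  have h2 : twistedRegular ζ x * twistedRegular ζ x⁻¹ = 1 := by
    rw [twistedRegular_mul hζ, hnorm, mul_inv_cancel, twistedRegular_one hζ]
    simp
  exact left_inv_eq_right_inv h1 h2

/-- The twisted regular representation has no common eigenvector for an infinite subgroup. -/
lemma eq_zero_of_twistedRegular_eigenvector (N : Subgroup G) [Infinite N]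
    (v : lp (fun _ : G ↦ ℂ) 2)
    (hv : ∀ n ∈ N, ∃ c : ℂ, ‖c‖ = 1 ∧ twistedRegular ζ n v = c • v) : v = 0 := by
  ext g
  have hconst (n : N) : ‖v ((n : G)⁻¹ * g)‖ = ‖v g‖ := by
    obtain ⟨c, hc, h⟩ := hv n n.2
    have := congrArg (fun w : lp (fun _ : G ↦ ℂ) 2 ↦ ‖w g‖) h
    simpa [twistedRegular_apply, Circle.norm_coe, hc] using this
  have hsum : Summable fun n : N ↦ ‖v g‖ ^ (2 : ENNReal).toReal := by
    have h := ((lp.memℓp v).summable (by simp)).comp_injective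
      (i := fun n : N ↦ (n : G)⁻¹ * g) (fun m n h ↦ by simpa using h)
    simpa only [Function.comp_def, hconst] using h
  have := (summable_const_iff _).mp hsum
  simpa using this

end TwistedRegular

section ProjectiveKernel

variable {G : Type*} [Group G] {H : Type*} [NormedAddCommGroup H] [InnerProductSpace ℂ H]
  [CompleteSpace H] {ζ : G → G → Circle} {π : G → (H →L[ℂ] H)}

lemma IsZetaRep.apply_mul (hπ : IsZetaRep ζ π) (x y : G) :
    π (x * y) = ((ζ x y)⁻¹ : Circle) • (π x * π y) := by
  rw [hπ.2.2, ← Circle.smul_def, inv_smul_smul]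

/-- The projective kernel of a `ζ`-representation, as a subgroup. -/
def IsZetaRep.projKer (hπ : IsZetaRep ζ π) (hnorm : IsNormalised ζ) : Subgroup G where
  carrier := {x | ∃ z : Circle, π x = z • (1 : H →L[ℂ] H)}
  one_mem' := ⟨1, by rw [hπ.2.1, one_smul]⟩
  mul_mem' := by
    rintro x y ⟨z, hz⟩ ⟨w, hw⟩
    exact ⟨(ζ x y)⁻¹ * (z * w), by
      rw [hπ.apply_mul, hz, hw, smul_mul_smul_comm, one_mul, smul_smul]⟩
  inv_mem' := by
    rintro x ⟨z, hz⟩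
    refine ⟨z⁻¹, ?_⟩
    have h := hπ.2.2 x x⁻¹
    rw [hz, hnorm, mul_inv_cancel, hπ.2.1, smul_mul_assoc, one_mul] at h
    rw [eq_inv_smul_iff, h]
    simp

lemma IsZetaRep.projKer_normal (hπ : IsZetaRep ζ π) (hnorm : IsNormalised ζ) :
    (hπ.projKer hnorm).Normal where
  conj_mem := by
    rintro x ⟨z, hz⟩ g
    refine ⟨(ζ (g * x) g⁻¹)⁻¹ * ((ζ g x)⁻¹ * z), ?_⟩
    have h : π g * π g⁻¹ = 1 := by
      rw [hπ.2.2, hnorm, mul_inv_cancel, hπ.2.1]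
      simp
    rw [hπ.apply_mul, hπ.apply_mul, hz, mul_smul_comm, mul_one, smul_mul_assoc, smul_mul_assoc, h,
      smul_smul, smul_smul, mul_assoc]

/-- A nontrivial element in the projective kernel yields a twisted character of its normal
closure by which that subgroup acts. -/
lemma IsZetaRep.exists_twistedCharacter [Nontrivial H] (hπ : IsZetaRep ζ π)
    (hnorm : IsNormalised ζ) {x : G} (hx : x ∈ ProjKer π) :
    ∃ χ : Subgroup.normalClosure {x} → Circle,
      (∀ m n, χ m * χ n = ζ m n * χ (m * n)) ∧
      ∀ n : Subgroup.normalClosure {x}, π n = χ n • (1 : H →L[ℂ] H) := by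
  have := hπ.projKer_normal hnorm
  have hle : Subgroup.normalClosure {x} ≤ hπ.projKer hnorm :=
    Subgroup.normalClosure_le_normal (Set.singleton_subset_iff.mpr hx)
  choose χ hχ using fun n : Subgroup.normalClosure {x} ↦ hle n.2
  refine ⟨χ, fun m n ↦ ?_, hχ⟩
  have h := hπ.2.2 m n
  rw [← Subgroup.coe_mul, hχ, hχ, hχ, ← Circle.smul_def, smul_mul_smul_comm, one_mul,
    smul_smul] at h
  obtain ⟨v, hv⟩ := exists_ne (0 : H)
  have hv' := congrArg (fun T : H →L[ℂ] H ↦ T v) h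
  simp only [Circle.smul_def, smul_apply, one_apply_eq_self] at hv'
  exact Circle.ext (smul_left_injective ℂ hv hv')

end ProjectiveKernel

/-- A closed subspace invariant under a self-adjoint set generating a C⋆-algebra is invariant under
the whole algebra. -/
lemma invariant_of_generators {A : Type*} [CStarAlgebra A] {s : Set A}
    (hs : ∀ b ∈ s, star b ∈ s) (hdense : Dense (StarAlgebra.adjoin ℂ s : Set A))
    {H : Type*} [NormedAddCommGroup H] [InnerProductSpace ℂ H] [CompleteSpace H]
    (ρ : A →⋆ₐ[ℂ] (H →L[ℂ] H)) {K : Submodule ℂ H} (hK : IsClosed (K : Set H))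
    (hinv : ∀ a ∈ s, ∀ v ∈ K, ρ a v ∈ K) (a : A) (v : H) (hv : v ∈ K) :
    ρ a v ∈ K := by
  have hadj (b : A) (hb : b ∈ StarAlgebra.adjoin ℂ s) :
      (∀ v ∈ K, ρ b v ∈ K) ∧ ∀ v ∈ K, ρ (star b) v ∈ K := by
    induction hb using StarAlgebra.adjoin_induction with
    | mem b hb => exact ⟨hinv _ hb, hinv _ (hs b hb)⟩
    | algebraMap r =>
      have h (c : ℂ) : ∀ v ∈ K, ρ (algebraMap ℂ A c) v ∈ K := fun v hv ↦ by
        rw [AlgHomClass.commutes, Algebra.algebraMap_eq_smul_one]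
        exact K.smul_mem c hv
      refine ⟨h r, ?_⟩
      rw [← algebraMap_star_comm]
      exact h (star r)
    | add b c hb hc ihb ihc =>
      rw [star_add, map_add, map_add]
      exact ⟨fun v hv ↦ K.add_mem (ihb.1 v hv) (ihc.1 v hv),
        fun v hv ↦ K.add_mem (ihb.2 v hv) (ihc.2 v hv)⟩
    | mul b c hb hc ihb ihc =>
      rw [star_mul, map_mul, map_mul]
      exact ⟨fun v hv ↦ ihb.1 _ (ihc.1 v hv), fun v hv ↦ ihc.2 _ (ihb.2 v hv)⟩
    | star b hb ihb =>
      rw [star_star]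
      exact ihb.symm
  have hcont : Continuous fun c : A ↦ ρ c v :=
    (ContinuousLinearMap.apply ℂ H v).continuous.comp
      (AddMonoidHomClass.continuous_of_bound ρ 1 fun a ↦ by
        simpa using NonUnitalStarAlgHom.norm_apply_le ρ a)
  exact hdense.induction (P := fun a ↦ ρ a v ∈ K) (fun b hb ↦ (hadj b hb).1 v hv)
    (hK.preimage hcont) a

lemma infinite_normalClosure {G : Type*} [Group G]
    (hcase : (∀ g : G, g ≠ 1 → ∀ n : ℕ, 0 < n → g ^ n ≠ 1) ∨
      (Nontrivial G ∧ ∀ g : G, g ≠ 1 → {h : G | IsConj g h}.Infinite))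
    (x : G) (hx : x ≠ 1) : Infinite (Subgroup.normalClosure {x}) := by
  rcases hcase with h | ⟨-, h⟩
  · have hmem : x ∈ Subgroup.normalClosure {x} := Subgroup.subset_normalClosure rfl
    have hinj : Function.Injective fun n : ℕ ↦ x ^ n := by
      refine injective_pow_iff_not_isOfFinOrder.mpr fun hfin ↦ ?_
      obtain ⟨n, hn, hxn⟩ := isOfFinOrder_iff_pow_eq_one.mp hfin
      exact h x hx n hn hxn
    refine Infinite.of_injective
      (fun n : ℕ ↦ (⟨x ^ n, pow_mem hmem n⟩ : Subgroup.normalClosure {x})) fun m n hmn ↦ ?_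
    exact hinj (congrArg Subtype.val hmn)
  · refine Set.infinite_coe_iff.mpr ((h x hx).mono fun y hy ↦ ?_)
    obtain ⟨c, rfl⟩ := isConj_iff.mp hy
    exact Subgroup.normalClosure_normal.conj_mem x
      (Subgroup.subset_normalClosure (Set.mem_singleton x)) c

/-- The generators of a closed star subalgebra span a dense star subalgebra of it. -/
lemma dense_adjoin_preimage {B : Type*} [CStarAlgebra B] (s : Set B) :
    Dense (StarAlgebra.adjoin ℂ
      {a : (StarAlgebra.adjoin ℂ s).topologicalClosure | (a : B) ∈ s} :
        Set (StarAlgebra.adjoin ℂ s).topologicalClosure) := by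
  set S := (StarAlgebra.adjoin ℂ s).topologicalClosure
  have hsS : s ⊆ S := (StarAlgebra.subset_adjoin ℂ s).trans
    (StarSubalgebra.le_topologicalClosure _)
  have himage : S.subtype '' {a : S | (a : B) ∈ s} = s :=
    Set.ext fun b ↦ ⟨fun ⟨a, ha, hab⟩ ↦ hab ▸ ha, fun hb ↦ ⟨⟨b, hsS hb⟩, hb, rfl⟩⟩
  have hmap := StarAlgHom.map_adjoin S.subtype {a : S | (a : B) ∈ s}
  rw [himage] at hmap
  have hcoe : Subtype.val '' (StarAlgebra.adjoin ℂ {a : S | (a : B) ∈ s} : Set S) =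
      (StarAlgebra.adjoin ℂ s : Set B) := congrArg SetLike.coe hmap
  intro a
  rw [Topology.IsInducing.subtypeVal.closure_eq_preimage_closure_image]
  have ha : (a : B) ∈ closure (StarAlgebra.adjoin ℂ s : Set B) := a.2
  rw [← hcoe] at ha
  exact ha

/-- If a C⋆-algebra is generated by a copy `u` of `Γ` twisted by `ζ`, and no nonzero element `e`
satisfies `e * u n = χ n • e` for all `n` in the normal closure of a nontrivial element and some
function `χ`, then some irreducible representation of it restricts to a projectively faithful
`ζ`-representation of `Γ`. -/
theorem exists_irreducible_pFaithful {Γ A : Type} [Group Γ] [Countable Γ] (hFab : PropertyFab Γ)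
    {ζ : Γ → Γ → Circle} (hnorm : IsNormalised ζ) [CStarAlgebra A] [PartialOrder A]
    [StarOrderedRing A] [Nontrivial A] {H : Type*} [NormedAddCommGroup H] [InnerProductSpace ℂ H]
    [CompleteSpace H] (ρ : A →⋆ₐ[ℂ] (H →L[ℂ] H)) (hρ : Function.Injective ρ)
    (u : Γ → A) (hu1 : u 1 = 1) (humul : ∀ x y, u x * u y = (ζ x y : ℂ) • u (x * y))
    (hustar : ∀ x, star (u x) = u x⁻¹)
    (hdense : Dense (StarAlgebra.adjoin ℂ (Set.range u) : Set A))
    (hfree : ∀ x : Γ, x ≠ 1 → ∀ χ : Subgroup.normalClosure {x} → Circle, ∀ e : A,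
      (∀ n : Subgroup.normalClosure {x}, e * u n = (χ n : ℂ) • e) → e = 0) :
    ∃ (H : Type) (_ : NormedAddCommGroup H) (_ : InnerProductSpace ℂ H) (_ : CompleteSpace H)
      (π : Γ → (H →L[ℂ] H)),
      IsZetaRep ζ π ∧ IsIrreducibleRep π ∧ PFaithful π := by
  have huinv (x : Γ) : u x * u x⁻¹ = 1 := by
    rw [humul, hnorm, mul_inv_cancel, hu1]
    simp
  let ι := Σ x : {x : Γ // x ≠ 1}, {χ : Subgroup.normalClosure {x.1} → Circle //
    ∀ m n, χ m * χ n = ζ m n * χ (m * n)}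
  have : Countable ι := by
    have (x : {x : Γ // x ≠ 1}) : Countable {χ : Subgroup.normalClosure {x.1} → Circle //
        ∀ m n, χ m * χ n = ζ m n * χ (m * n)} := by
      have := hFab x.1
      have := finite_twistedCharacters fun m n : Subgroup.normalClosure {x.1} ↦ ζ m n
      exact Finite.to_countable
    infer_instance
  let D (i : ι) : Set A := Set.range fun n ↦ (i.2.1 n : ℂ) • (1 : A) - u n
  have hD (i : ι) (e : A) (he : e ≠ 0) : ∃ d ∈ D i, e * d ≠ 0 := by
    by_contra! hcon
    refine he (hfree i.1.1 i.1.2 i.2.1 e fun n ↦ ?_)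
    have h := hcon _ ⟨n, rfl⟩
    rw [mul_sub, mul_smul_comm, mul_one, sub_eq_zero] at h
    exact h.symm
  obtain ⟨f, hf, hirr, hfD⟩ := exists_irreducible_gns ρ hρ D hD
  have hrep : IsZetaRep ζ fun x ↦ f.gnsStarAlgHom (u x) := by
    refine ⟨fun x ↦ ?_, by simp only [hu1, map_one], fun x y ↦ by
      simp only [← map_mul, humul, map_smul]⟩
    have h := huinv x⁻¹
    rw [inv_inv] at h
    rw [Unitary.mem_iff, ← map_star, ← map_mul, ← map_mul, hustar, huinv, h, map_one]
    exact ⟨rfl, rfl⟩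
  refine ⟨f.GNS, inferInstance, inferInstance, inferInstance, fun x ↦ f.gnsStarAlgHom (u x),
    hrep, fun K hK hinv ↦ hirr K hK (invariant_of_generators ?_ hdense _ hK ?_), fun x hx ↦ ?_⟩
  · rintro _ ⟨x, rfl⟩
    exact ⟨x⁻¹, (hustar x).symm⟩
  · rintro _ ⟨x, rfl⟩
    exact hinv x
  · by_contra hx1
    obtain ⟨χ, hχ, hπχ⟩ := hrep.exists_twistedCharacter hnorm hx
    obtain ⟨_, ⟨n, rfl⟩, hd⟩ := hfD ⟨⟨x, hx1⟩, χ, hχ⟩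
    refine hd ?_
    have h : f.gnsStarAlgHom (u n) = (χ n : ℂ) • (1 : f.GNS →L[ℂ] f.GNS) := hπχ n
    rw [map_sub, map_smul, map_one, h, sub_self]

/-- A countable group with Property (Fab) which is torsion-free or icc has, for every
normalised multiplier ζ, an irreducible projectively faithful ζ-representation. -/
theorem stmt_17 (Γ : Type) [Group Γ] [Countable Γ] (hFab : PropertyFab Γ)
    (hcase : (∀ g : Γ, g ≠ 1 → ∀ n : ℕ, 0 < n → g ^ n ≠ 1) ∨
      (Nontrivial Γ ∧ ∀ g : Γ, g ≠ 1 → {h : Γ | IsConj g h}.Infinite))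
    (ζ : Γ → Γ → Circle) (hζ : IsMultiplier ζ) (hnorm : IsNormalised ζ) :
    ∃ (H : Type) (_ : NormedAddCommGroup H) (_ : InnerProductSpace ℂ H) (_ : CompleteSpace H)
      (π : Γ → (H →L[ℂ] H)),
      IsZetaRep ζ π ∧ IsIrreducibleRep π ∧ PFaithful π := by
  let s : Set (lp (fun _ : Γ ↦ ℂ) 2 →L[ℂ] lp (fun _ : Γ ↦ ℂ) 2) := Set.range (twistedRegular ζ)
  let S := (StarAlgebra.adjoin ℂ s).topologicalClosure
  have hSclosed : IsClosed (S : Set (lp (fun _ : Γ ↦ ℂ) 2 →L[ℂ] lp (fun _ : Γ ↦ ℂ) 2)) :=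
    StarSubalgebra.isClosed_topologicalClosure _
  let _ : PartialOrder S := CStarAlgebra.spectralOrder S
  have : StarOrderedRing S := CStarAlgebra.spectralOrderedRing S
  let u (x : Γ) : S := ⟨twistedRegular ζ x, StarSubalgebra.le_topologicalClosure _
    (StarAlgebra.subset_adjoin ℂ s ⟨x, rfl⟩)⟩
  have hustar (x : Γ) : star (u x) = u x⁻¹ := Subtype.ext (star_twistedRegular hζ hnorm x)
  have hnt : Nontrivial (lp (fun _ : Γ ↦ ℂ) 2) := by
    classical
    exact ⟨lp.single 2 (1 : Γ) (1 : ℂ), 0, fun h ↦ one_ne_zero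
      (by simpa using congrArg (fun v : lp (fun _ : Γ ↦ ℂ) 2 ↦ v 1) h : (1 : ℂ) = 0)⟩
  have : Nontrivial S := ⟨1, 0, fun h ↦ one_ne_zero (congrArg Subtype.val h)⟩
  have hrange : {a : S | (a : lp (fun _ : Γ ↦ ℂ) 2 →L[ℂ] lp (fun _ : Γ ↦ ℂ) 2) ∈ s} =
      Set.range u :=
    Set.ext fun a ↦ ⟨fun ⟨x, hx⟩ ↦ ⟨x, Subtype.ext hx⟩, fun ⟨x, hx⟩ ↦ ⟨x, congrArg Subtype.val hx⟩⟩
  refine exists_irreducible_pFaithful hFab hnorm S.subtype Subtype.val_injective u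
    (Subtype.ext (twistedRegular_one hζ)) (fun x y ↦ Subtype.ext (twistedRegular_mul hζ x y))
    hustar (hrange ▸ dense_adjoin_preimage s) fun x hx χ e he ↦ ?_
  have := infinite_normalClosure hcase x hx
  refine star_eq_zero.mp (Subtype.ext (ContinuousLinearMap.ext fun v ↦ ?_))
  refine eq_zero_of_twistedRegular_eigenvector (ζ := ζ) (Subgroup.normalClosure {x}) _
    fun n hn ↦ ⟨star (χ ⟨n⁻¹, inv_mem hn⟩ : ℂ), by rw [norm_star, Circle.norm_coe], ?_⟩
  have h := congrArg star (he ⟨n⁻¹, inv_mem hn⟩)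
  rw [star_mul, star_smul, hustar, inv_inv] at h
  exact congrArg (fun T : S ↦ (T : lp (fun _ : Γ ↦ ℂ) 2 →L[ℂ] lp (fun _ : Γ ↦ ℂ) 2) v) h
end

section
/- Let L be an abelian group, let X(L) be the group of homomorphisms from L to the circle group T, equipped with the topology of pointwise convergence, and let M be a dense subgroup of X(L). Then the direct product group L × M has a projective unitary representation which is both irreducible and projectively faithful. -/
/-- The topology of pointwise convergence on the character group `X(L) = Hom(L, T)`. -/
noncomputable def homTopology (L : Type) [CommGroup L] : TopologicalSpace (L →* Circle) :=
  TopologicalSpace.induced (fun f : L →* Circle => (f : L → Circle)) inferInstance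

open scoped ENNReal

/-- Characters into the circle detect nontrivial elements of an abelian group: compose a character
into `ℚ / ℤ` with the injective homomorphism `q ↦ exp (2πiq)`. -/
theorem exists_monoidHom_circle_apply_ne_one {L : Type*} [CommGroup L] {a : L} (ha : a ≠ 1) :
    ∃ χ : L →* Circle, χ a ≠ 1 := by
  obtain ⟨c, hc⟩ := CharacterModule.exists_character_apply_ne_zero_of_ne_zero
    (A := Additive L) (a := Additive.ofMul a) (by simpa using ha)
  let e : ℚ →+ Additive Circle :=
    { toFun := fun q => Additive.ofMul (Circle.exp (2 * Real.pi * q))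
      map_zero' := by simp
      map_add' := fun p q => by
        simp [mul_add, Circle.exp_add] }
  have he : ∀ q : ℚ, e q = 0 ↔ q ∈ AddSubgroup.zmultiples (1 : ℚ) := by
    intro q
    have : e q = 0 ↔ Circle.exp (2 * Real.pi * q) = 1 := Iff.rfl
    rw [this, Circle.exp_eq_one, AddSubgroup.mem_zmultiples_iff]
    refine exists_congr fun n => ?_
    rw [mul_comm, mul_left_inj' (by positivity), zsmul_one, eq_comm]
    exact_mod_cast Iff.rfl
  let f : AddCircle (1 : ℚ) →+ Additive Circle :=
    QuotientAddGroup.lift _ e fun q hq => (he q).2 hq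
  refine ⟨AddMonoidHom.toMultiplicative (f.comp c), fun h => hc ?_⟩
  have h' : f (c (Additive.ofMul a)) = 0 := h
  induction hq : c (Additive.ofMul a) using QuotientAddGroup.induction_on with
  | H q =>
    rw [hq] at h'
    exact (QuotientAddGroup.eq_zero_iff q).2 ((he q).1 h')

/-- A dense subgroup of the character group separates points. -/
theorem exists_mem_apply_ne_of_dense {L : Type} [CommGroup L] {M : Subgroup (L →* Circle)}
    (hM : @Dense (L →* Circle) (homTopology L) (M : Set (L →* Circle))) {x y : L} (hxy : x ≠ y) :
    ∃ χ ∈ M, χ x ≠ χ y := by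
  let _ : TopologicalSpace (L →* Circle) := homTopology L
  have hcont : ∀ z : L, Continuous fun χ : L →* Circle => χ z := fun z =>
    (continuous_apply z).comp continuous_induced_dom
  obtain ⟨χ, hχ⟩ := exists_monoidHom_circle_apply_ne_one (a := x / y) (by simpa [div_eq_one])
  obtain ⟨ψ, hψ, hψM⟩ := hM.inter_open_nonempty {χ | χ x ≠ χ y}
    (isOpen_ne_fun (hcont x) (hcont y)) ⟨χ, by simpa [div_eq_one] using hχ⟩
  exact ⟨ψ, hψM, hψ⟩

section Monomial

variable {ι : Type*} (u : ι → Circle) (σ : Equiv.Perm ι)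

/-- The weighted permutation operator `f ↦ u · (f ∘ σ)` on `ℓ²`. -/
noncomputable def monomialIsometry :
    lp (fun _ : ι => ℂ) 2 →ₗᵢ[ℂ] lp (fun _ : ι => ℂ) 2 where
  toFun f := ⟨fun x => u x * f (σ x), by
    refine memℓp_gen ?_
    simpa [Function.comp_def, Circle.norm_coe] using (σ.summable_iff (f := fun x => ‖f x‖ ^ (2 : ℝ≥0∞).toReal)).2
      ((memℓp_gen_iff (by simp)).1 (lp.memℓp f))⟩
  map_add' f g := by ext x; exact mul_add _ _ _
  map_smul' c f := by ext x; simp [mul_left_comm]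
  norm_map' f := by
    rw [lp.norm_eq_tsum_rpow (by simp), lp.norm_eq_tsum_rpow (by simp)]
    congr 1
    simpa [Circle.norm_coe] using σ.tsum_eq fun x => ‖f x‖ ^ (2 : ℝ≥0∞).toReal

@[simp]
theorem monomialIsometry_apply (f : lp (fun _ : ι => ℂ) 2) (x : ι) :
    monomialIsometry u σ f x = u x * f (σ x) := rfl

theorem monomialIsometry_mem_unitary :
    (monomialIsometry u σ).toContinuousLinearMap ∈
      unitary (lp (fun _ : ι => ℂ) 2 →L[ℂ] lp (fun _ : ι => ℂ) 2) := by
  have hsurj : Function.Surjective (monomialIsometry u σ) := fun f =>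
    ⟨monomialIsometry (fun x => (u (σ.symm x))⁻¹) σ.symm f, by
      ext x; simp⟩
  exact (Unitary.linearIsometryEquiv.symm
    (LinearIsometryEquiv.ofSurjective (monomialIsometry u σ) hsurj)).2

end Monomial

section Commutation

variable {G : Type*} [Group G] {H : Type*} [NormedAddCommGroup H] [InnerProductSpace ℂ H]
  [CompleteSpace H] {π : G → (H →L[ℂ] H)}

/-- The orthogonal projection onto an invariant subspace of a projective unitary representation
commutes with the representation. -/
theorem IsProjUnitaryRep.starProjection_comm (hπ : IsProjUnitaryRep π) (K : Submodule ℂ H)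
    [K.HasOrthogonalProjection] (hK : ∀ x, ∀ v ∈ K, π x v ∈ K) (g : G) (v : H) :
    K.starProjection (π g v) = π g (K.starProjection v) := by
  obtain ⟨hu, h1, hmul⟩ := hπ
  refine Submodule.eq_starProjection_of_mem_orthogonal
    (hK g _ (K.starProjection_apply_mem v)) ?_
  rw [← map_sub, Submodule.mem_orthogonal]
  intro k hk
  obtain ⟨z, hz⟩ := hmul g g⁻¹
  have hgk : π g ((z : ℂ)⁻¹ • π g⁻¹ k) = k := by
    have := congrArg (fun T : H →L[ℂ] H => T k) hz
    simp only [mul_inv_cancel, h1, mul_apply_eq_comp,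
      smul_apply, one_apply_eq_self] at this
    rw [map_smul, this, inv_smul_smul₀ (Circle.coe_ne_zero z)]
  rw [← hgk, ContinuousLinearMap.inner_map_map_of_mem_unitary (hu g)]
  exact K.sub_starProjection_mem_orthogonal v _ (K.smul_mem _ (hK _ _ hk))

/-- A projective unitary representation whose commutant consists of scalars is irreducible. -/
theorem IsProjUnitaryRep.isIrreducibleRep (hπ : IsProjUnitaryRep π)
    (hscalar : ∀ T : H →L[ℂ] H, (∀ g v, T (π g v) = π g (T v)) → ∃ c : ℂ, ∀ v, T v = c • v) :
    IsIrreducibleRep π := by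
  intro K hKc hK
  have : CompleteSpace K := hKc.completeSpace_coe
  obtain ⟨c, hc⟩ := hscalar K.starProjection (hπ.starProjection_comm K hK)
  by_cases h0 : c = 0
  · left
    rw [Submodule.eq_bot_iff]
    intro v hv
    rw [← K.starProjection_eq_self_iff.2 hv, hc, h0, zero_smul]
  · right
    rw [Submodule.eq_top_iff']
    intro v
    have hv := K.starProjection_apply_mem v
    rw [hc] at hv
    exact (K.smul_mem_iff h0).1 hv

end Commutation

section WeylHeisenberg

variable {L : Type} [CommGroup L] {M : Subgroup (L →* Circle)}

/-- The operator `f ↦ (x ↦ χ(x) f(a⁻¹x))` on `ℓ²(L)`. -/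
noncomputable def weylRep (M : Subgroup (L →* Circle)) (g : L × M) :
    lp (fun _ : L => ℂ) 2 →L[ℂ] lp (fun _ : L => ℂ) 2 :=
  (monomialIsometry (fun x => (g.2 : L →* Circle) x)
    (Equiv.mulLeft g.1⁻¹)).toContinuousLinearMap

@[simp]
theorem weylRep_apply (g : L × M) (f : lp (fun _ : L => ℂ) 2) (x : L) :
    weylRep M g f x = (g.2 : L →* Circle) x * f (g.1⁻¹ * x) := rfl

theorem isProjUnitaryRep_weylRep : IsProjUnitaryRep (weylRep M) := by
  refine ⟨fun g => monomialIsometry_mem_unitary _ _, ?_, fun g h => ?_⟩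
  · ext f x
    simp
  · refine ⟨(h.2 : L →* Circle) g.1⁻¹, ?_⟩
    ext f x
    simp only [mul_apply_eq_comp, weylRep_apply, smul_apply,
      lp.coeFn_smul, Pi.smul_apply, smul_eq_mul, Prod.fst_mul, Prod.snd_mul, Subgroup.coe_mul,
      MonoidHom.mul_apply, map_mul, Circle.coe_mul, mul_inv_rev, mul_assoc]
    exact mul_left_comm _ _ _

open scoped Classical in
theorem weylRep_single (g : L × M) (y : L) :
    weylRep M g (lp.single 2 y 1) =
      ((g.2 : L →* Circle) (g.1 * y) : ℂ) • lp.single 2 (g.1 * y) (1 : ℂ) := by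
  ext x
  by_cases hx : x = g.1 * y
  · subst hx
    simp
  · have hx' : g.1⁻¹ * x ≠ y := fun h => hx (by rw [← h, mul_inv_cancel_left])
    simp [hx, hx']

open scoped Classical in
theorem exists_eq_smul_of_comm_weylRep
    (hM : ∀ x y : L, x ≠ y → ∃ χ ∈ M, χ x ≠ χ y)
    (T : lp (fun _ : L => ℂ) 2 →L[ℂ] lp (fun _ : L => ℂ) 2)
    (hT : ∀ g v, T (weylRep M g v) = weylRep M g (T v)) : ∃ c : ℂ, ∀ v, T v = c • v := by
  let e : L → lp (fun _ : L => ℂ) 2 := fun y => lp.single 2 y 1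
  refine ⟨T (e 1) 1, ?_⟩
  have hoff : ∀ x y, x ≠ y → T (e y) x = 0 := by
    intro x y hxy
    obtain ⟨χ, hχ, hne⟩ := hM x y hxy
    have h := congrArg (fun f => f x) (hT (1, ⟨χ, hχ⟩) (e y))
    simp only [e, weylRep_single, map_smul, one_mul, lp.coeFn_smul, Pi.smul_apply, smul_eq_mul,
      weylRep_apply, inv_one] at h
    by_contra h0
    exact hne (Circle.ext (mul_right_cancel₀ h0 h)).symm
  have hdiag : ∀ y, T (e y) y = T (e 1) 1 := by
    intro y
    have h := congrArg (fun f => f y) (hT (y, 1) (e 1))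
    simpa [e, weylRep_single] using h
  have he : ∀ y, T (e y) = T (e 1) 1 • e y := by
    intro y
    ext x
    by_cases hx : x = y
    · subst hx
      simp [hdiag x, e]
    · simp [hoff x y hx, e, hx]
  intro v
  have hv := lp.hasSum_single (p := 2) (by simp) v
  have hterm : ∀ y, T (lp.single 2 y (v y)) = T (e 1) 1 • lp.single 2 y (v y) := by
    intro y
    have : (lp.single 2 y (v y) : lp (fun _ : L => ℂ) 2) = v y • e y := by
      rw [← lp.single_smul, smul_eq_mul, mul_one]
    rw [this, map_smul, he, smul_comm]
  have h1 := hv.mapL T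
  simp only [hterm] at h1
  exact h1.unique (hv.const_smul _)

open scoped Classical in
theorem pFaithful_weylRep : PFaithful (weylRep M) := by
  rintro ⟨a, χ⟩ ⟨z, hz⟩
  have hval : ∀ y x, (weylRep M (a, χ) (lp.single 2 y 1)) x
      = (z : ℂ) * (lp.single 2 y (1 : ℂ) : lp (fun _ : L => ℂ) 2) x := by
    intro y x
    rw [hz]
    rfl
  simp only [weylRep_single] at hval
  have ha : a = 1 := by
    by_contra ha
    simpa [ha] using hval 1 a
  subst ha
  have hχ : ∀ y, (χ : L →* Circle) y = z := fun y => Circle.ext (by simpa using hval y y)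
  have hχ1 : χ = 1 := Subtype.ext <| MonoidHom.ext fun y => by
    rw [hχ y, ← hχ 1]
    simp
  rw [hχ1]
  rfl

end WeylHeisenberg

/-- For an abelian group L and a dense subgroup M of X(L), the group L × M has an
irreducible projectively faithful projective unitary representation. -/
theorem stmt_18 (L : Type) [CommGroup L] (M : Subgroup (L →* Circle))
    (hM : @Dense (L →* Circle) (homTopology L) (M : Set (L →* Circle))) :
    ∃ (H : Type) (_ : NormedAddCommGroup H) (_ : InnerProductSpace ℂ H) (_ : CompleteSpace H)
      (π : L × M → (H →L[ℂ] H)),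
      IsProjUnitaryRep π ∧ IsIrreducibleRep π ∧ PFaithful π := by
  refine ⟨lp (fun _ : L => ℂ) 2, inferInstance, inferInstance, inferInstance, weylRep M,
    isProjUnitaryRep_weylRep, ?_, pFaithful_weylRep⟩
  exact isProjUnitaryRep_weylRep.isIrreducibleRep <|
    exists_eq_smul_of_comm_weylRep fun _ _ => exists_mem_apply_ne_of_dense hM
end
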